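/- arXiv:1409.5023 — 2 statements merged into one kernel-verified Lean document; each statement's English description precedes it below -/
import Mathlib

section
/- With χ₊ as in the previous context and χ₋(b) = (π²/6)(30b⁸−64b⁷+80b⁶−80b⁵+76b⁴−16b³−8b²+1), the function χ defined by χ(b) = χ₋(b) for 0 < b ≤ 1/4 and χ(b) = χ₊(b) for 1/4 < b < 1/2 is C³ on (0, 1/2), but χ is not C^{3,1} at 1/4; in fact the fourth derivative of χ₊ tends to +∞ as b → 1/4⁺. -/
open Real Filter

noncomputable def chiMinus (b : ℝ) : ℝ :=
  π^2/6 * (30*b^8 - 64*b^7 + 80*b^6 - 80*b^5 + 76*b^4 - 16*b^3 - 8*b^2 + 1)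

noncomputable def chiPlus (b : ℝ) : ℝ :=
  2*π^2*b*(1 - 2*b)^3*(-2*b^3 + 3*b^2 - 6*b + 4) / (3*(1 - b)^2)
  + π*(30*b^10 - 124*b^9 + 238*b^8 - 176*b^7 - 260*b^6 + 424*b^5 - 76*b^4
        - 144*b^3 + 89*b^2 - 18*b + 1) / (6*(1 - b)^2)
      * arccos (-1 + (4*b - 1)/(2*b^2))
  + π*(1 - 2*b)*(-180*b^7 + 444*b^6 - 554*b^5 + 754*b^4 - 1214*b^3 + 922*b^2
        - 305*b + 37) / (72*(1 - b))
      * Real.sqrt (4*b - 1)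
  + 4*π*b*(1 - 2*b)^4*(7*b^2 + 2*b - 2) / (3*(1 - b)^2)
      * arctan (Real.sqrt (4*b - 1))
  + 4*π*b^2*(1 - 2*b)^4*(2 - b) / (1 - b)^2
      * arctan ((1 - 3*b)/((1 - b) * Real.sqrt (4*b - 1)))

noncomputable def chi (b : ℝ) : ℝ := if b ≤ 1/4 then chiMinus b else chiPlus b

open Polynomial in
/-- Numerators of the coefficients of `arctan √(4 * b - 1)` in the derivatives, of order at most
three, of `72 / π * (chiPlus - chiMinus)`. -/
noncomputable def arctanNum : ℕ → ℝ[X]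
  | 0 => -1440 * X ^ 10 + 5952 * X ^ 9 - 11424 * X ^ 8 + 33024 * X ^ 7 - 61248 * X ^ 6
      + 62592 * X ^ 5 - 39360 * X ^ 4 + 16128 * X ^ 3 - 4272 * X ^ 2 + 672 * X - 48
  | 1 => 11520 * X ^ 10 - 56064 * X ^ 9 + 122112 * X ^ 8 - 256512 * X ^ 7 + 476160 * X ^ 6
      - 555264 * X ^ 5 + 391680 * X ^ 4 - 173568 * X ^ 3 + 48384 * X ^ 2 - 7872 * X + 576
  | 2 => -80640 * X ^ 10 + 451584 * X ^ 9 - 1115136 * X ^ 8 + 2002944 * X ^ 7 - 3224064 * X ^ 6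
      + 3967488 * X ^ 5 - 3168000 * X ^ 4 + 1566720 * X ^ 3 - 472320 * X ^ 2 + 81024 * X - 6144
  | _ => 483840 * X ^ 10 - 3064320 * X ^ 9 + 8524800 * X ^ 8 - 14929920 * X ^ 7
      + 20468736 * X ^ 6 - 23311872 * X ^ 5 + 19837440 * X ^ 4 - 11105280 * X ^ 3
      + 3755520 * X ^ 2 - 701568 * X + 56448

open Polynomial in
/-- Numerators of the coefficients of `√(4 * b - 1)` in the derivatives, of order at most three,
of `72 / π * (chiPlus - chiMinus)`. -/
noncomputable def sqrtNum : ℕ → ℝ[X]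
  | 0 => 360 * X ^ 8 - 1068 * X ^ 7 + 1552 * X ^ 6 - 2062 * X ^ 5 + 3182 * X ^ 4 - 3058 * X ^ 3
      + 1532 * X ^ 2 - 379 * X + 37
  | 1 => -2880 * X ^ 9 + 10656 * X ^ 8 - 17632 * X ^ 7 + 22896 * X ^ 6 - 28800 * X ^ 5
      + 27552 * X ^ 4 - 15744 * X ^ 3 + 4776 * X ^ 2 - 656 * X + 24
  | 2 => 20160 * X ^ 10 - 89376 * X ^ 9 + 171264 * X ^ 8 - 220272 * X ^ 7 + 246000 * X ^ 6
      - 221856 * X ^ 5 + 133488 * X ^ 4 - 45960 * X ^ 3 + 7416 * X ^ 2 - 264 * X - 24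
  | _ => -120960 * X ^ 11 + 624960 * X ^ 10 - 1382592 * X ^ 9 + 1853472 * X ^ 8
      - 1887168 * X ^ 7 + 1578912 * X ^ 6 - 957024 * X ^ 5 + 354384 * X ^ 4 - 64608 * X ^ 3
      + 2688 * X ^ 2 + 192 * X + 48

noncomputable def arctanCoeff (n : ℕ) (b : ℝ) : ℝ :=
  (arctanNum n).eval b / (1 - b) ^ (n + 2)

noncomputable def sqrtCoeff (n : ℕ) (b : ℝ) : ℝ :=
  (sqrtNum n).eval b / (b ^ n * (1 - b) ^ (n + 1))

/-- For `n ≤ 3`, the `n`-th derivative of `72 / π * (chi - chiMinus)` on `(0, 1/2)`. It vanishes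
for `b ≤ 1/4` because `√` does so on nonpositive numbers. -/
noncomputable def chiTail (n : ℕ) (b : ℝ) : ℝ :=
  arctanCoeff n b * arctan √(4 * b - 1) + sqrtCoeff n b * √(4 * b - 1)

lemma chiTail_of_le (n : ℕ) {b : ℝ} (hb : b ≤ 1 / 4) : chiTail n b = 0 := by
  simp [chiTail, Real.sqrt_eq_zero_of_nonpos (show 4 * b - 1 ≤ 0 by linarith)]

/-! ### Elementary form of `chiPlus` -/

section Trigonometry

variable {b : ℝ}

lemma arctan_sqrt_mem (h₁ : 1 / 4 < b) (h₂ : b < 1 / 2) :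
    arctan √(4 * b - 1) ∈ Set.Ioo 0 (π / 4) := by
  constructor
  · rw [← arctan_zero]
    exact arctan_strictMono (Real.sqrt_pos.2 (by linarith))
  · rw [← arctan_one]
    exact arctan_strictMono ((Real.sqrt_lt' one_pos).2 (by linarith))

lemma cos_sq_arctan_sqrt (h₁ : 1 / 4 < b) : cos (arctan √(4 * b - 1)) ^ 2 = 1 / (4 * b) := by
  rw [cos_sq_arctan, Real.sq_sqrt (by linarith)]
  ring_nf

lemma arccos_eq_pi_sub (h₁ : 1 / 4 < b) (h₂ : b < 1 / 2) :
    arccos (-1 + (4 * b - 1) / (2 * b ^ 2)) = π - 4 * arctan √(4 * b - 1) := by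
  obtain ⟨h₃, h₄⟩ := arctan_sqrt_mem h₁ h₂
  have hb : b ≠ 0 := by linarith
  refine arccos_eq_of_eq_cos (by linarith) (by linarith) ?_
  rw [cos_pi_sub, show 4 * arctan √(4 * b - 1) = 2 * (2 * arctan √(4 * b - 1)) by ring, cos_two_mul,
    cos_two_mul, cos_sq_arctan_sqrt h₁]
  field_simp
  ring

lemma arctan_div_eq_pi_div_two_sub (h₁ : 1 / 4 < b) (h₂ : b < 1 / 2) :
    arctan ((1 - 3 * b) / ((1 - b) * √(4 * b - 1))) = π / 2 - 3 * arctan √(4 * b - 1) := by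
  obtain ⟨h₃, h₄⟩ := arctan_sqrt_mem h₁ h₂
  have hb : b ≠ 0 := by linarith
  have hb' : 1 - b ≠ 0 := by linarith
  have hs : √(4 * b - 1) ≠ 0 := (Real.sqrt_pos.2 (by linarith)).ne'
  refine arctan_eq_of_tan_eq ?_ ⟨by linarith, by linarith⟩
  have hc := (cos_arctan_pos √(4 * b - 1)).ne'
  have hc2 := cos_sq_arctan_sqrt h₁
  have hsin : sin (arctan √(4 * b - 1)) = √(4 * b - 1) * cos (arctan √(4 * b - 1)) := by
    rw [← tan_mul_cos hc, tan_arctan]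
  have hs2 : √(4 * b - 1) ^ 2 = 4 * b - 1 := Real.sq_sqrt (by linarith)
  rw [tan_pi_div_two_sub, tan_eq_sin_div_cos, sin_three_mul, cos_three_mul, hsin]
  generalize cos (arctan √(4 * b - 1)) = c at *
  generalize √(4 * b - 1) = s at *
  have e₁ : 3 * (s * c) - 4 * (s * c) ^ 3 = s * c * ((1 - b) / b) := by
    rw [show 3 * (s * c) - 4 * (s * c) ^ 3 = s * c * (3 - 4 * (s ^ 2 * c ^ 2)) by ring, hs2, hc2]
    field_simp
    ring
  have e₂ : 4 * c ^ 3 - 3 * c = c * ((1 - 3 * b) / b) := by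
    rw [show 4 * c ^ 3 - 3 * c = c * (4 * c ^ 2 - 3) by ring, hc2]
    field_simp
  rw [e₁, e₂, inv_div]
  field_simp

lemma chiPlus_eq (h₁ : 1 / 4 < b) (h₂ : b < 1 / 2) :
    chiPlus b = chiMinus b + π / 72 * chiTail 0 b := by
  have hb' : 1 - b ≠ 0 := by linarith
  simp only [chiPlus, chiMinus, chiTail, arctanCoeff, sqrtCoeff, arctanNum, sqrtNum,
    arccos_eq_pi_sub h₁ h₂, arctan_div_eq_pi_div_two_sub h₁ h₂]
  generalize arctan √(4 * b - 1) = t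
  generalize √(4 * b - 1) = s
  simp only [Polynomial.eval_add, Polynomial.eval_sub, Polynomial.eval_mul, Polynomial.eval_pow,
    Polynomial.eval_X, Polynomial.eval_ofNat, Polynomial.eval_neg]
  field_simp
  ring

lemma chi_eq (h₂ : b < 1 / 2) : chi b = chiMinus b + π / 72 * chiTail 0 b := by
  unfold chi
  split_ifs with h
  · simp [chiTail_of_le 0 h]
  · exact chiPlus_eq (not_le.1 h) h₂

end Trigonometry

/-! ### Derivatives of `chiTail` -/

lemma hasDerivAt_mul_arctan_sqrt_add {F C : ℝ → ℝ} {F' C' b : ℝ} (hb : 1 / 4 < b)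
    (hF : HasDerivAt F F' b) (hC : HasDerivAt C C' b) :
    HasDerivAt (fun x => F x * arctan √(4 * x - 1) + C x * √(4 * x - 1))
      (F' * arctan √(4 * b - 1)
        + (C' * (4 * b - 1) + 2 * C b + F b / (2 * b)) / √(4 * b - 1)) b := by
  have hpos : 0 < 4 * b - 1 := by linarith
  have hs : √(4 * b - 1) ≠ 0 := (Real.sqrt_pos.2 hpos).ne'
  have hs2 : √(4 * b - 1) ^ 2 = 4 * b - 1 := Real.sq_sqrt hpos.le
  have hb0 : b ≠ 0 := by linarith
  have hlin : HasDerivAt (fun x : ℝ => 4 * x - 1) 4 b := by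
    simpa using ((hasDerivAt_id b).const_mul 4).sub_const 1
  have hsqrt := hlin.sqrt hpos.ne'
  refine ((hF.mul hsqrt.arctan).add (hC.mul hsqrt)).congr_deriv ?_
  rw [hs2, show 1 + (4 * b - 1) = 4 * b by ring]
  field_simp
  rw [hs2]
  ring

lemma hasDerivAt_arctanCoeff (n : ℕ) {b : ℝ} (hb : b ≠ 1) :
    HasDerivAt (arctanCoeff n) (((arctanNum n).derivative.eval b * (1 - b)
      + (n + 2) * (arctanNum n).eval b) / (1 - b) ^ (n + 3)) b := by
  have hb' : 1 - b ≠ 0 := sub_ne_zero.2 hb.symm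
  have hden := ((hasDerivAt_id b).const_sub 1).fun_pow (n + 2)
  refine (((arctanNum n).hasDerivAt b).div hden (pow_ne_zero _ hb')).congr_deriv ?_
  simp only [id, Nat.cast_add, Nat.cast_ofNat, show n + 2 - 1 = n + 1 from rfl]
  field_simp
  ring

lemma hasDerivAt_sqrtCoeff (n : ℕ) {b : ℝ} (hb₀ : b ≠ 0) (hb : b ≠ 1) :
    HasDerivAt (sqrtCoeff n) (((sqrtNum n).derivative.eval b * (b * (1 - b))
      - (sqrtNum n).eval b * (n * (1 - b) - (n + 1) * b))
        / (b ^ (n + 1) * (1 - b) ^ (n + 2))) b := by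
  have hb' : 1 - b ≠ 0 := sub_ne_zero.2 hb.symm
  have hden := ((hasDerivAt_id b).fun_pow n).mul
    (((hasDerivAt_id b).const_sub 1).fun_pow (n + 1))
  refine (((sqrtNum n).hasDerivAt b).div hden
    (mul_ne_zero (pow_ne_zero _ hb₀) (pow_ne_zero _ hb'))).congr_deriv ?_
  rcases n with _ | n
  · simp
    field_simp
  · simp only [id, Nat.add_sub_cancel, Nat.cast_add, Nat.cast_one, Pi.mul_apply]
    field_simp
    ring

lemma continuousAt_chiTail (n : ℕ) {b : ℝ} (hb₀ : b ≠ 0) (hb : b ≠ 1) :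
    ContinuousAt (chiTail n) b := by
  have h₁ := (hasDerivAt_arctanCoeff n hb).continuousAt
  have h₂ := (hasDerivAt_sqrtCoeff n hb₀ hb).continuousAt
  unfold chiTail
  fun_prop

lemma arctanNum_succ {n : ℕ} (hn : n < 3) (b : ℝ) :
    (arctanNum (n + 1)).eval b
      = (arctanNum n).derivative.eval b * (1 - b) + (n + 2) * (arctanNum n).eval b := by
  interval_cases n <;> simp [arctanNum, Polynomial.derivative_pow] <;> ring

lemma sqrtNum_succ {n : ℕ} (hn : n < 3) (b : ℝ) :
    (4 * b - 1) * (sqrtNum (n + 1)).eval b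
      = ((sqrtNum n).derivative.eval b * (b * (1 - b))
          - (sqrtNum n).eval b * (n * (1 - b) - (n + 1) * b)) * (4 * b - 1)
        + 2 * (sqrtNum n).eval b * (b * (1 - b)) + (arctanNum n).eval b * b ^ n / 2 := by
  interval_cases n <;> simp [arctanNum, sqrtNum, Polynomial.derivative_pow] <;> ring

lemma hasDerivAt_chiTail_of_gt {n : ℕ} (hn : n < 3) {b : ℝ} (h₁ : 1 / 4 < b) (h₂ : b < 1 / 2) :
    HasDerivAt (chiTail n) (chiTail (n + 1) b) b := by
  have hb0 : b ≠ 0 := by linarith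
  have hb1 : b ≠ 1 := by linarith
  have hb' : 1 - b ≠ 0 := by linarith
  have hpos : 0 < 4 * b - 1 := by linarith
  have hs : √(4 * b - 1) ≠ 0 := (Real.sqrt_pos.2 hpos).ne'
  have hs2 : √(4 * b - 1) ^ 2 = 4 * b - 1 := Real.sq_sqrt hpos.le
  refine (hasDerivAt_mul_arctan_sqrt_add h₁ (hasDerivAt_arctanCoeff n hb1)
    (hasDerivAt_sqrtCoeff n hb0 hb1)).congr_deriv ?_
  rw [← arctanNum_succ hn, chiTail, arctanCoeff, arctanCoeff]
  congr 1
  rw [div_eq_iff hs, mul_assoc, ← sq, hs2, sqrtCoeff, sqrtCoeff,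
    div_mul_eq_mul_div ((sqrtNum (n + 1)).eval b), mul_comm ((sqrtNum (n + 1)).eval b),
    sqrtNum_succ hn]
  field_simp
  ring

lemma hasDerivAt_chiTail {n : ℕ} (hn : n < 3) {b : ℝ} (hb : b ∈ Set.Ioo (0 : ℝ) (1 / 2)) :
    HasDerivAt (chiTail n) (chiTail (n + 1) b) b := by
  obtain ⟨h₁, h₂⟩ := hb
  rcases lt_trichotomy b (1 / 4) with h | rfl | h
  · rw [chiTail_of_le _ h.le]
    refine (hasDerivAt_const b (0 : ℝ)).congr_of_eventuallyEq ?_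
    filter_upwards [Iio_mem_nhds h] with x hx using chiTail_of_le n (le_of_lt hx)
  · have hleft : HasDerivWithinAt (chiTail n) (chiTail (n + 1) (1 / 4))
        (Set.Iic (1 / 4)) (1 / 4) := by
      rw [chiTail_of_le _ le_rfl]
      exact (hasDerivWithinAt_const _ _ (0 : ℝ)).congr (fun x hx => chiTail_of_le n hx)
        (chiTail_of_le n le_rfl)
    have hright : HasDerivWithinAt (chiTail n) (chiTail (n + 1) (1 / 4))
        (Set.Ici (1 / 4)) (1 / 4) := by
      have hd : ∀ x ∈ Set.Ioo (1 / 4 : ℝ) (1 / 2), HasDerivAt (chiTail n) (chiTail (n + 1) x) x :=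
        fun x hx => hasDerivAt_chiTail_of_gt hn hx.1 hx.2
      have hmem : Set.Ioo (1 / 4 : ℝ) (1 / 2) ∈ nhdsWithin (1 / 4) (Set.Ioi (1 / 4 : ℝ)) :=
        Ioo_mem_nhdsGT (by norm_num)
      refine hasDerivWithinAt_Ici_of_tendsto_deriv (s := Set.Ioo (1 / 4) (1 / 2))
        (fun x hx => (hd x hx).differentiableAt.differentiableWithinAt)
        (continuousAt_chiTail n (by norm_num) (by norm_num)).continuousWithinAt hmem ?_
      refine Tendsto.congr' ?_ ((continuousAt_chiTail (n + 1) (b := 1 / 4) (by norm_num)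
        (by norm_num)).tendsto.mono_left nhdsWithin_le_nhds)
      filter_upwards [hmem] with x hx using (hd x hx).deriv.symm
    simpa [Set.Iic_union_Ici, hasDerivWithinAt_univ] using hleft.union hright
  · exact hasDerivAt_chiTail_of_gt hn h h₂

/-! ### Regularity of `chi` -/

lemma contDiff_chiMinus {n : WithTop ℕ∞} : ContDiff ℝ n chiMinus := by
  unfold chiMinus
  fun_prop

lemma differentiable_iteratedDeriv_chiMinus (n : ℕ) :
    Differentiable ℝ (iteratedDeriv n chiMinus) :=
  contDiff_chiMinus.differentiable_iteratedDeriv n (WithTop.coe_lt_coe.2 (ENat.natCast_lt_top n))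

lemma contDiffOn_succ_of_hasDerivAt {n : ℕ} {f f' : ℝ → ℝ} {s : Set ℝ} (hs : IsOpen s)
    (hf : ∀ x ∈ s, HasDerivAt f (f' x) x) (hf' : ContDiffOn ℝ n f' s) :
    ContDiffOn ℝ (n + 1) f s :=
  (contDiffOn_succ_iff_deriv_of_isOpen hs).2
    ⟨fun x hx => (hf x hx).differentiableAt.differentiableWithinAt, by simp,
      hf'.congr fun x hx => (hf x hx).deriv⟩

lemma contDiffOn_chiTail {k n : ℕ} (h : n + k ≤ 3) :
    ContDiffOn ℝ k (chiTail n) (Set.Ioo 0 (1 / 2)) := by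
  induction k generalizing n with
  | zero =>
    rw [Nat.cast_zero, contDiffOn_zero]
    exact fun x hx =>
      (continuousAt_chiTail n hx.1.ne' (by linarith [hx.2])).continuousWithinAt
  | succ k ih =>
    exact_mod_cast contDiffOn_succ_of_hasDerivAt isOpen_Ioo
      (fun x hx => hasDerivAt_chiTail (by omega) hx) (ih (n := n + 1) (by omega))

lemma iteratedDeriv_chiPlus {n : ℕ} (hn : n ≤ 3) {b : ℝ} (hb : b ∈ Set.Ioo (1 / 4 : ℝ) (1 / 2)) :
    iteratedDeriv n chiPlus b = iteratedDeriv n chiMinus b + π / 72 * chiTail n b := by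
  induction n generalizing b with
  | zero => simpa using chiPlus_eq hb.1 hb.2
  | succ n ih =>
    have hev : iteratedDeriv n chiPlus =ᶠ[nhds b]
        fun x => iteratedDeriv n chiMinus x + π / 72 * chiTail n x := by
      filter_upwards [isOpen_Ioo.mem_nhds hb] with x hx using ih (by omega) hx
    rw [iteratedDeriv_succ, iteratedDeriv_succ, hev.deriv_eq]
    exact ((differentiable_iteratedDeriv_chiMinus _ b).hasDerivAt.add
      ((hasDerivAt_chiTail_of_gt (by omega) hb.1 hb.2).const_mul _)).deriv

lemma tendsto_iteratedDeriv_four_chiPlus :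
    Tendsto (iteratedDeriv 4 chiPlus) (nhdsWithin (1 / 4) (Set.Ioi (1 / 4))) atTop := by
  set N : ℝ → ℝ := fun b => ((sqrtNum 3).derivative.eval b * (b * (1 - b))
      - (sqrtNum 3).eval b * ((3 : ℕ) * (1 - b) - ((3 : ℕ) + 1) * b))
        / (b ^ (3 + 1) * (1 - b) ^ (3 + 2)) * (4 * b - 1)
      + 2 * sqrtCoeff 3 b + arctanCoeff 3 b / (2 * b) with hN
  set A : ℝ → ℝ := fun b => ((arctanNum 3).derivative.eval b * (1 - b)
      + ((3 : ℕ) + 2) * (arctanNum 3).eval b) / (1 - b) ^ (3 + 3) * arctan √(4 * b - 1) with hA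
  have hev : ∀ᶠ b in nhdsWithin (1 / 4) (Set.Ioi (1 / 4 : ℝ)),
      iteratedDeriv 4 chiMinus b + π / 72 * (A b + N b * (√(4 * b - 1))⁻¹)
        = iteratedDeriv 4 chiPlus b := by
    filter_upwards [Ioo_mem_nhdsGT (show (1 / 4 : ℝ) < 1 / 2 by norm_num)] with b hb
    have hb0 : b ≠ 0 := by linarith [hb.1]
    have hb1 : b ≠ 1 := by linarith [hb.2]
    have hev : iteratedDeriv 3 chiPlus =ᶠ[nhds b]
        fun x => iteratedDeriv 3 chiMinus x + π / 72 * chiTail 3 x := by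
      filter_upwards [isOpen_Ioo.mem_nhds hb] with x hx using iteratedDeriv_chiPlus le_rfl hx
    have htail : HasDerivAt (chiTail 3) _ b := hasDerivAt_mul_arctan_sqrt_add hb.1
      (hasDerivAt_arctanCoeff 3 hb1) (hasDerivAt_sqrtCoeff 3 hb0 hb1)
    rw [iteratedDeriv_succ (n := 3) (f := chiMinus), iteratedDeriv_succ (n := 3) (f := chiPlus),
      hev.deriv_eq]
    exact ((differentiable_iteratedDeriv_chiMinus _ b).hasDerivAt.add (htail.const_mul _)).deriv.symm
  refine Tendsto.congr' hev ?_
  have hcoeff₁ := (hasDerivAt_arctanCoeff 3 (b := 1 / 4) (by norm_num)).continuousAt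
  have hcoeff₂ := (hasDerivAt_sqrtCoeff 3 (b := 1 / 4) (by norm_num) (by norm_num)).continuousAt
  have hNc : ContinuousAt N (1 / 4) := by
    have := (sqrtNum 3).continuous
    have := (sqrtNum 3).derivative.continuous
    simp only [hN]
    fun_prop (disch := norm_num)
  have hAc : ContinuousAt A (1 / 4) := by
    have := (arctanNum 3).continuous
    have := (arctanNum 3).derivative.continuous
    simp only [hA]
    fun_prop (disch := norm_num)
  have hMc : ContinuousAt (iteratedDeriv 4 chiMinus) (1 / 4) :=
    (differentiable_iteratedDeriv_chiMinus 4).continuous.continuousAt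
  have hNpos : 0 < N (1 / 4) := by
    simp [hN, sqrtCoeff, arctanCoeff, arctanNum, sqrtNum]
    norm_num
  have hsqrt : Tendsto (fun b : ℝ => (√(4 * b - 1))⁻¹)
      (nhdsWithin (1 / 4) (Set.Ioi (1 / 4))) atTop := by
    refine tendsto_inv_nhdsGT_zero.comp (tendsto_nhdsWithin_iff.2 ⟨?_, ?_⟩)
    · have : ContinuousAt (fun b : ℝ => √(4 * b - 1)) (1 / 4) := by fun_prop
      simpa using this.tendsto.mono_left nhdsWithin_le_nhds
    · filter_upwards [self_mem_nhdsWithin] with b hb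
      exact Real.sqrt_pos.2 (by linarith [Set.mem_Ioi.1 hb])
  exact (hMc.tendsto.mono_left nhdsWithin_le_nhds).add_atTop
    (((hAc.tendsto.mono_left nhdsWithin_le_nhds).add_atTop
      ((hNc.tendsto.mono_left nhdsWithin_le_nhds).pos_mul_atTop hNpos hsqrt)).const_mul_atTop
        (by positivity))

theorem chi_C3_not_C31 :
    ContDiffOn ℝ 3 chi (Set.Ioo 0 (1/2)) ∧
    (¬ ∃ ε > (0:ℝ), ∃ K : NNReal,
        LipschitzOnWith K (iteratedDeriv 3 chi) (Set.Ioo (1/4 - ε) (1/4 + ε))) ∧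
    Tendsto (iteratedDeriv 4 chiPlus) (nhdsWithin (1/4) (Set.Ioi (1/4))) atTop := by
  refine ⟨?_, ?_, tendsto_iteratedDeriv_four_chiPlus⟩
  · have htail : ContDiffOn ℝ 3 (chiTail 0) (Set.Ioo 0 (1 / 2)) :=
      contDiffOn_chiTail (k := 3) (n := 0) le_rfl
    exact (contDiff_chiMinus.contDiffOn.add (contDiffOn_const.mul htail)).congr
      fun b hb => chi_eq hb.2
  · rintro ⟨ε, hε, K, hK⟩
    have hmem : Set.Ioo (1 / 4 : ℝ) (1 / 4 + ε) ∈ nhdsWithin (1 / 4) (Set.Ioi (1 / 4 : ℝ)) :=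
      Ioo_mem_nhdsGT (by linarith)
    obtain ⟨b, hbig, hb⟩ :=
      ((tendsto_iteratedDeriv_four_chiPlus.eventually_gt_atTop (K : ℝ)).and hmem).exists
    have hev : chi =ᶠ[nhds b] chiPlus := by
      filter_upwards [Ioi_mem_nhds hb.1] with x hx using if_neg (not_le.2 hx)
    have hle := norm_deriv_le_of_lipschitzOn (Ioo_mem_nhds (by linarith [hb.1]) hb.2) hK
    rw [← iteratedDeriv_succ, hev.iteratedDeriv_eq 4] at hle
    exact absurd hbig (not_lt.2 ((le_abs_self _).trans hle))
end

section
/- For 1/4 < b < 1/2, with r₀ = (1 − 2b − b^{3/2})/(√b(1−b)), one has ∫_{r₀}^1 r·arctan( √(4b⁴r² − (1 − 3b + b² − b(1−b)r²)²) / (1 − b − b² − b(1−b)r²) ) dr = π(1−2b)(b+1)/(8(1−b)²) + ((1−2b)/(4b(1−b)))√(4b−1) − ((b+2)(1−2b)/(4b(1−b)))·arctan(√(4b−1)) − ((1+b)(1−2b)/(4(1−b)²))·arctan((1−3b)/((1−b)√(4b−1))). -/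
open Real intervalIntegral

/-- The triple-angle identity `cot (3 φ) = (1 - 3 t²) / (3 t - t³)` with `t = tan φ`. -/
lemma arctan_cot_three_mul_arctan {t : ℝ} (ht0 : 0 < t) (ht1 : t < 1) :
    arctan ((1 - 3 * t ^ 2) / (3 * t - t ^ 3)) = π / 2 - 3 * arctan t := by
  have hφ0 : 0 < arctan t := arctan_pos.2 ht0
  have hφ1 : arctan t < π / 4 := arctan_one ▸ arctan_strictMono ht1
  have hpi := pi_pos
  have hcos : 0 < cos (arctan t) := cos_arctan_pos t
  have hsin : sin (arctan t) = t * cos (arctan t) := by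
    rw [← tan_mul_cos hcos.ne', tan_arctan]
  have hsq : cos (arctan t) ^ 2 * (1 + t ^ 2) = 1 := by
    rw [cos_sq_arctan]; field_simp
  refine arctan_eq_of_tan_eq ?_ ⟨by linarith, by linarith⟩
  rw [tan_pi_div_two_sub, tan_eq_sin_div_cos, inv_div, cos_three_mul, sin_three_mul, hsin]
  have hs : 3 * (t * cos (arctan t)) - 4 * (t * cos (arctan t)) ^ 3
      = cos (arctan t) ^ 3 * (3 * t - t ^ 3) := by
    linear_combination (-3 * t * cos (arctan t)) * hsq
  have hc : 4 * cos (arctan t) ^ 3 - 3 * cos (arctan t)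
      = cos (arctan t) ^ 3 * (1 - 3 * t ^ 2) := by
    linear_combination (3 * cos (arctan t)) * hsq
  rw [hs, hc, mul_div_mul_left _ _ (pow_pos hcos 3).ne']

/-- The radicand of the integrand as a function of `u = r ^ 2`. -/
def radicand (b u : ℝ) : ℝ := 4 * b ^ 4 * u - (1 - 3 * b + b ^ 2 - b * (1 - b) * u) ^ 2

/-- The denominator of the integrand as a function of `u = r ^ 2`. -/
def denom (b u : ℝ) : ℝ := 1 - b - b ^ 2 - b * (1 - b) * u

/-- The affine function of `u` whose square differs from `1` by a multiple of `radicand b u`. -/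
noncomputable def arcsinArg (b u : ℝ) : ℝ :=
  (b * (1 - b) ^ 2 * u - (1 - 4 * b + 4 * b ^ 2 + b ^ 3)) / (2 * b * √b * (1 - 2 * b))

/-- An antiderivative of `u ↦ arctan (√(radicand b u) / denom b u)`. -/
noncomputable def primitive (b u : ℝ) : ℝ :=
  (u - (1 - b) / b) * arctan (√(radicand b u) / denom b u)
    + √(radicand b u) / (2 * (b * (1 - b)))
    + b * (1 - 2 * b) / (1 - b) ^ 2 * arcsin (arcsinArg b u)

lemma radicand_add_denom_sq (b u : ℝ) :
    radicand b u + denom b u ^ 2 = 4 * b * (1 - 2 * b) * ((1 - b) - b * u) := by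
  unfold radicand denom; ring

lemma one_sub_arcsinArg_sq {b : ℝ} (hb0 : 0 < b) (hb2 : b < 1 / 2) (u : ℝ) :
    1 - arcsinArg b u ^ 2 =
      radicand b u * ((1 - b) / (2 * b * √b * (1 - 2 * b))) ^ 2 := by
  have hs : 0 < √b := sqrt_pos.2 hb0
  have hss : √b ^ 2 = b := sq_sqrt hb0.le
  have h2 : 1 - b * 2 ≠ 0 := by linarith
  unfold arcsinArg radicand
  field_simp
  rw [hss]
  ring

lemma hasDerivAt_primitive {b u : ℝ} (hb0 : 0 < b) (hb2 : b < 1 / 2)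
    (hP : 0 < radicand b u) (hQ : 0 < denom b u) :
    HasDerivAt (primitive b) (arctan (√(radicand b u) / denom b u)) u := by
  have hs : 0 < √b := sqrt_pos.2 hb0
  have h2 : 0 < 1 - 2 * b := by linarith
  have h1 : 0 < 1 - b := by linarith
  have hw : 0 < √(radicand b u) := sqrt_pos.2 hP
  have hww : √(radicand b u) ^ 2 = radicand b u := sq_sqrt hP.le
  have hsum := radicand_add_denom_sq b u
  have hlin : 0 < (1 - b) - b * u := by
    have : 0 < 4 * b * (1 - 2 * b) * ((1 - b) - b * u) := by rw [← hsum]; positivity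
    exact pos_of_mul_pos_right this (by positivity)
  have hA := one_sub_arcsinArg_sq hb0 hb2 u
  have hA0 : 0 < 1 - arcsinArg b u ^ 2 := by rw [hA]; positivity
  have hAs : √(1 - arcsinArg b u ^ 2) =
      √(radicand b u) * ((1 - b) / (2 * b * √b * (1 - 2 * b))) := by
    rw [hA, sqrt_mul hP.le, sqrt_sq (by positivity)]
  have dP : HasDerivAt (radicand b)
      (4 * b ^ 4 + 2 * (b * (1 - b)) * (1 - 3 * b + b ^ 2 - b * (1 - b) * u)) u := by
    have h := ((hasDerivAt_id u).const_mul (4 * b ^ 4)).sub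
      ((((hasDerivAt_id u).const_mul (b * (1 - b))).const_sub (1 - 3 * b + b ^ 2)).pow 2)
    exact h.congr_deriv (by simp; ring)
  have dQ : HasDerivAt (denom b) (-(b * (1 - b))) u := by
    have h := ((hasDerivAt_id u).const_mul (b * (1 - b))).const_sub (1 - b - b ^ 2)
    exact h.congr_deriv (by simp)
  have dA : HasDerivAt (arcsinArg b)
      (b * (1 - b) ^ 2 / (2 * b * √b * (1 - 2 * b))) u := by
    have h := (((hasDerivAt_id u).const_mul (b * (1 - b) ^ 2)).sub_const
      (1 - 4 * b + 4 * b ^ 2 + b ^ 3)).div_const (2 * b * √b * (1 - 2 * b))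
    exact h.congr_deriv (by simp)
  have dS := dP.sqrt hP.ne'
  have dArc := (hasDerivAt_arcsin (x := arcsinArg b u) (by nlinarith) (by nlinarith)).comp u dA
  have h := ((((hasDerivAt_id u).sub_const ((1 - b) / b)).mul (dS.div dQ hQ.ne').arctan).add
    (dS.div_const (2 * (b * (1 - b))))).add
    (dArc.const_mul (b * (1 - 2 * b) / (1 - b) ^ 2))
  refine h.congr_deriv ?_
  rw [hAs]
  have hθ : 1 + (√(radicand b u) / denom b u) ^ 2
      = 4 * b * (1 - 2 * b) * ((1 - b) - b * u) / denom b u ^ 2 := by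
    rw [← hsum, div_pow, hww]; field_simp; ring
  simp only [Pi.div_apply, id, one_mul]
  rw [hθ]
  generalize √(radicand b u) = w at hw hww ⊢
  generalize arctan (w / denom b u) = θ
  have h2' : 1 - b * 2 ≠ 0 := by linarith
  have hu : u - (1 - b) / b = -((1 - b - b * u) / b) := by field_simp; ring
  rw [hu]
  generalize 1 - b - b * u = L at hlin ⊢
  field_simp
  rw [hww]
  unfold radicand denom
  ring

theorem integral_r_arctan (b : ℝ) (hb1 : 1/4 < b) (hb2 : b < 1/2)
    (hb3 : b < (3 - Real.sqrt 5)/2) :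
    (∫ r in ((1 - 2*b - b ^ ((3:ℝ)/2)) / (Real.sqrt b * (1 - b)))..1,
        r * arctan (Real.sqrt (4*b^4*r^2 - (1 - 3*b + b^2 - b*(1 - b)*r^2)^2)
          / (1 - b - b^2 - b*(1 - b)*r^2))) =
      π*(1 - 2*b)*(b + 1)/(8*(1 - b)^2)
      + (1 - 2*b)/(4*b*(1 - b)) * Real.sqrt (4*b - 1)
      - (b + 2)*(1 - 2*b)/(4*b*(1 - b)) * arctan (Real.sqrt (4*b - 1))
      - (1 + b)*(1 - 2*b)/(4*(1 - b)^2)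
          * arctan ((1 - 3*b)/((1 - b) * Real.sqrt (4*b - 1))) := by
  have hb0 : 0 < b := by linarith
  have h2 : 0 < 1 - 2 * b := by linarith
  have h1 : 0 < 1 - b := by linarith
  have hs : 0 < √b := sqrt_pos.2 hb0
  have hss : √b ^ 2 = b := sq_sqrt hb0.le
  have hs1 : 1 / 2 < √b := lt_sqrt_of_sq_lt (by linarith)
  have hc : 0 < 1 - 3 * b + b ^ 2 := by
    have h5 : √5 ^ 2 = 5 := sq_sqrt (by norm_num)
    nlinarith [sqrt_nonneg 5]
  have hpow : b ^ ((3 : ℝ) / 2) = b * √b := by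
    rw [sqrt_eq_rpow, show (3 : ℝ) / 2 = 1 + 1 / 2 by norm_num, rpow_add hb0, rpow_one]
  rw [hpow]
  set r₀ := (1 - 2 * b - b * √b) / (√b * (1 - b)) with hr₀
  have hr₀mul : √b * (1 - b) * r₀ = 1 - 2 * b - b * √b := by rw [hr₀]; field_simp
  have hr₀pos : 0 < r₀ := by
    refine div_pos (sub_pos.2 (lt_of_pow_lt_pow_left₀ 2 h2.le ?_)) (by positivity)
    rw [mul_pow, hss]
    nlinarith [mul_pos h1 hc]
  have hr₀lt : r₀ < 1 := by
    rw [hr₀, div_lt_one (by positivity)]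
    nlinarith
  have hfac : ∀ r, (1 - b) * radicand b (r ^ 2) =
      (√b * (1 - b) * r - (1 - 2 * b - b * √b)) * (√b * (1 - b) * r + (1 - 2 * b) + b * √b)
        * (2 * b ^ 2 * r + (1 - 3 * b + b ^ 2) - b * (1 - b) * r ^ 2) := by
    intro r
    have : (√b * (1 - b) * r - (1 - 2 * b - b * √b)) * (√b * (1 - b) * r + (1 - 2 * b) + b * √b)
        = (1 - b) * (b * (1 - b) * r ^ 2 + 2 * b ^ 2 * r - (1 - 3 * b + b ^ 2)) := by
      linear_combination ((1 - b) ^ 2 * r ^ 2 + 2 * b * (1 - b) * r + b ^ 2) * hss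
    rw [this]; unfold radicand; ring
  have hP₀ : radicand b (r₀ ^ 2) = 0 := by
    have := hfac r₀
    rw [hr₀mul, sub_self, zero_mul, zero_mul] at this
    exact (mul_eq_zero.1 this).resolve_left h1.ne'
  have hP : ∀ r ∈ Set.Ioo r₀ 1, 0 < radicand b (r ^ 2) := by
    rintro r ⟨hr, hr'⟩
    have hr0 : 0 < r := hr₀pos.trans hr
    refine pos_of_mul_pos_right (b := radicand b (r ^ 2)) (a := 1 - b) ?_ h1.le
    rw [hfac, ← hr₀mul, ← mul_sub]
    have e1 : 0 < r - r₀ := sub_pos.2 hr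
    have e3 : 0 < 2 * b ^ 2 * r + (1 - 3 * b + b ^ 2) - b * (1 - b) * r ^ 2 := by
      have : 0 < (1 - 3 * b + b ^ 2) * (1 - r) + (1 - 2 * b) ^ 2 * r
          + b * (1 - b) * (r * (1 - r)) := by
        have : 0 < 1 - r := sub_pos.2 hr'
        positivity
      nlinarith
    positivity
  have hQ : ∀ r ∈ Set.Icc r₀ 1, 0 < denom b (r ^ 2) := by
    rintro r ⟨hr, hr'⟩
    have : r ^ 2 ≤ 1 := pow_le_one₀ (hr₀pos.le.trans hr) hr'
    unfold denom
    nlinarith [mul_nonneg (mul_pos hb0 h1).le (sub_nonneg.2 this)]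
  have cP : Continuous fun r : ℝ => √(radicand b (r ^ 2)) := by unfold radicand; fun_prop
  have cQ : Continuous fun r : ℝ => denom b (r ^ 2) := by unfold denom; fun_prop
  have cA : Continuous fun r : ℝ => arcsin (arcsinArg b (r ^ 2)) := by
    unfold arcsinArg; fun_prop
  have cθ : ContinuousOn (fun r : ℝ => arctan (√(radicand b (r ^ 2)) / denom b (r ^ 2)))
      (Set.Icc r₀ 1) :=
    continuous_arctan.comp_continuousOn
      (cP.continuousOn.div cQ.continuousOn fun r hr => (hQ r hr).ne')
  have key : ∫ r in r₀..1, r * arctan (√(radicand b (r ^ 2)) / denom b (r ^ 2)) =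
      primitive b (1 ^ 2) / 2 - primitive b (r₀ ^ 2) / 2 := by
    refine integral_eq_sub_of_hasDerivAt_of_le (f := fun r => primitive b (r ^ 2) / 2)
      hr₀lt.le ?_ ?_ ?_
    · exact ((((by fun_prop : Continuous fun r : ℝ => r ^ 2 - (1 - b) / b).continuousOn.mul
        cθ).add (cP.div_const _).continuousOn).add
        (cA.const_mul _).continuousOn).div_const _
    · intro r hr
      have h := ((hasDerivAt_primitive hb0 hb2 (hP r hr)
        (hQ r (Set.Ioo_subset_Icc_self hr))).comp (h := fun r : ℝ => r ^ 2) r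
        (hasDerivAt_pow 2 r)).div_const 2
      refine h.congr_deriv ?_
      push_cast
      ring
    · refine ContinuousOn.intervalIntegrable ?_
      rw [Set.uIcc_of_le hr₀lt.le]
      exact continuousOn_id.mul cθ
  refine key.trans ?_
  have hA₀ : arcsinArg b (r₀ ^ 2) = -1 := by
    have e : b * (1 - b) ^ 2 * r₀ ^ 2 = (1 - 2 * b - b * √b) ^ 2 := by
      rw [← hr₀mul, mul_pow, mul_pow, hss]
    unfold arcsinArg
    rw [e, div_eq_iff (by positivity)]
    linear_combination b ^ 2 * hss
  have ht0 : 0 < √(4 * b - 1) := sqrt_pos.2 (by linarith)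
  have htt : √(4 * b - 1) ^ 2 = 4 * b - 1 := sq_sqrt (by linarith)
  have ht1 : √(4 * b - 1) < 1 := by rw [sqrt_lt' one_pos]; linarith
  have hP₁ : √(radicand b (1 ^ 2)) = (1 - 2 * b) * √(4 * b - 1) := by
    have h : radicand b (1 ^ 2) = (1 - 2 * b) ^ 2 * (4 * b - 1) := by unfold radicand; ring
    rw [h, sqrt_mul (sq_nonneg _), sqrt_sq h2.le]
  have hQ₁ : denom b (1 ^ 2) = 1 - 2 * b := by unfold denom; ring
  have hcot : arctan ((1 - 3 * b) / ((1 - b) * √(4 * b - 1)))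
      = π / 2 - 3 * arctan √(4 * b - 1) := by
    rw [← arctan_cot_three_mul_arctan ht0 ht1]
    congr 1
    rw [show 3 * √(4 * b - 1) - √(4 * b - 1) ^ 3 = 4 * ((1 - b) * √(4 * b - 1)) by
      linear_combination (-√(4 * b - 1)) * htt, htt,
      show 1 - 3 * (4 * b - 1) = 4 * (1 - 3 * b) by ring, mul_div_mul_left _ _ four_ne_zero]
  have hA₁ : arcsin (arcsinArg b (1 ^ 2))
      = -arctan ((1 - 3 * b) / ((1 - b) * √(4 * b - 1))) := by
    have hsq := one_sub_arcsinArg_sq hb0 hb2 (1 ^ 2)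
    have hR : 0 ≤ radicand b (1 ^ 2) := by
      by_contra hneg
      rw [sqrt_eq_zero_of_nonpos (not_le.1 hneg).le] at hP₁
      exact (mul_pos h2 ht0).ne hP₁
    have hsqrt : √(1 - arcsinArg b (1 ^ 2) ^ 2)
        = (1 - b) * √(4 * b - 1) / (2 * b * √b) := by
      rw [hsq, sqrt_mul hR, sqrt_sq (by positivity), hP₁]
      field_simp
    have hval : arcsinArg b (1 ^ 2) = -(1 - 3 * b) / (2 * b * √b) := by
      have h2' : 1 - b * 2 ≠ 0 := by linarith
      unfold arcsinArg
      field_simp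
      ring
    have hpos : 0 < 1 - arcsinArg b (1 ^ 2) ^ 2 :=
      sqrt_pos.1 (by rw [hsqrt]; positivity)
    rw [arcsin_eq_arctan ⟨by nlinarith, by nlinarith⟩, hsqrt, hval, ← arctan_neg,
      div_div_div_cancel_right₀ (by positivity), neg_div]
  unfold primitive
  rw [hP₀, hA₀, hA₁, hP₁, hQ₁, hcot, mul_div_cancel_left₀ _ h2.ne', sqrt_zero, zero_div,
    arctan_zero, arcsin_neg_one]
  field_simp
  ring
end
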